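/- Let γ ∈ (0,1) be real, set α = 1 − γ, and define S_{γ,m}^× := 1/(2 Σ_{k=0}^m C(α,k)) for m ≥ 0. Then for every integer m ≥ 1 one has S_{γ,m+1}^× − S_{γ,m}^× ≤ S_{γ,2}^× − S_{γ,1}^×; that is, the increment of the finite-step stability bound is maximal at m = 1. -/

import Mathlib

/-- The generalized binomial coefficient `C(α,k) = α(α−1)⋯(α−k+1)/k!`. -/
noncomputable def genBinom (α : ℝ) (k : ℕ) : ℝ :=
  (∏ i ∈ Finset.range k, (α - i)) / (Nat.factorial k)

/-- The paper's `m`-step stability bound `S_{γ,m}^× = 1/(2 ∑_{k=0}^m C(1−γ,k))`. -/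
noncomputable def Sbound (γ : ℝ) (m : ℕ) : ℝ :=
  1 / (2 * ∑ k ∈ Finset.range (m + 1), genBinom (1 - γ) k)

/-!
Put `α = 1 - γ` and `T m = ∑_{k ≤ m} C(α,k)`. The increment of the bound at `m` is
`-C(α,m+1) / (2 T m T (m+1))`. From `k = 1` on, the coefficients `C(α,k)` alternate in sign and
decrease in absolute value, so `T 2` is the least of the `T m` with `m ≥ 1`. For `m ≥ 2` the
numerator is at most `-C(α,2) / 2`, and this factor `1/2` pays for replacing `T m` by `T 1`,
because `T 1 ≤ 2 T 2`.
-/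

theorem sum_range_two_mul_alternating_le {R : Type*} [CommRing R] [LinearOrder R]
    [IsStrictOrderedRing R] {f : ℕ → R} (f_antitone : Antitone f) (f_nonneg : ∀ i, 0 ≤ f i)
    {k n : ℕ} (hkn : 2 * k ≤ n) :
    ∑ i ∈ Finset.range (2 * k), (-1) ^ i * f i ≤ ∑ i ∈ Finset.range n, (-1) ^ i * f i := by
  have even_sums_mono : Monotone fun j ↦ ∑ i ∈ Finset.range (2 * j), (-1) ^ i * f i := by
    refine monotone_nat_of_le_succ fun j ↦ ?_
    have pair_le : f (2 * j + 1) ≤ f (2 * j) := f_antitone (Nat.le_succ _)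
    simp only [Nat.mul_succ, Finset.sum_range_succ, pow_succ (-1 : R) (2 * j),
      (even_two_mul j).neg_one_pow]
    linarith
  obtain ⟨j, rfl | rfl⟩ := Nat.even_or_odd' n
  · exact even_sums_mono (by lia)
  · rw [Finset.sum_range_succ, (even_two_mul j).neg_one_pow, one_mul]
    exact le_add_of_le_of_nonneg (even_sums_mono (by lia)) (f_nonneg _)

section GenBinom

variable {α : ℝ}

theorem genBinom_zero (α : ℝ) : genBinom α 0 = 1 := by
  simp [genBinom]

theorem genBinom_succ (α : ℝ) (k : ℕ) :
    genBinom α (k + 1) = genBinom α k * ((α - k) / (k + 1)) := by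
  simp only [genBinom, Finset.prod_range_succ, Nat.factorial_succ]
  push_cast
  field_simp

theorem genBinom_one (α : ℝ) : genBinom α 1 = α := by
  simp [genBinom]

theorem genBinom_two (α : ℝ) : genBinom α 2 = α * (α - 1) / 2 := by
  simp [genBinom, Finset.prod_range_succ]

theorem genBinom_four (α : ℝ) :
    genBinom α 4 = (2 - α) * (3 - α) / 12 * genBinom α 2 := by
  rw [genBinom_succ α 3, genBinom_succ α 2]
  push_cast
  ring

theorem abs_genBinom_antitone (hα : |α| ≤ 1) : Antitone fun k ↦ |genBinom α k| := by
  refine antitone_nat_of_succ_le fun k ↦ ?_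
  have ratio_le_one : |(α - k) / (k + 1)| ≤ 1 := by
    obtain ⟨neg_one_le, le_one⟩ := abs_le.mp hα
    rw [abs_div, abs_of_pos (by positivity : (0 : ℝ) < k + 1), div_le_one (by positivity), abs_le]
    constructor <;> linarith [k.cast_nonneg (α := ℝ)]
  rw [genBinom_succ, abs_mul]
  exact mul_le_of_le_one_right (abs_nonneg _) ratio_le_one

theorem genBinom_succ_eq_neg_one_pow_mul_abs (hα0 : 0 ≤ α) (hα1 : α ≤ 1) (k : ℕ) :
    genBinom α (k + 1) = (-1) ^ k * |genBinom α (k + 1)| := by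
  induction k with
  | zero => simp [genBinom_one, abs_of_nonneg hα0]
  | succ k ih =>
    have ratio_nonpos : (α - (k + 1 : ℕ)) / ((k + 1 : ℕ) + 1) ≤ 0 := by
      refine div_nonpos_of_nonpos_of_nonneg ?_ (by positivity)
      push_cast
      linarith [k.cast_nonneg (α := ℝ)]
    rw [genBinom_succ α (k + 1), abs_mul, abs_of_nonpos ratio_nonpos, pow_succ]
    linear_combination (α - (k + 1 : ℕ)) / ((k + 1 : ℕ) + 1) * ih

theorem genBinom_two_nonpos (hα0 : 0 ≤ α) (hα1 : α ≤ 1) : genBinom α 2 ≤ 0 := by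
  rw [genBinom_two]
  linarith [mul_nonneg hα0 (sub_nonneg.mpr hα1)]

theorem genBinom_two_div_two_le (hα0 : 0 ≤ α) (hα1 : α ≤ 1) {k : ℕ} (hk : 3 ≤ k) :
    genBinom α 2 / 2 ≤ genBinom α k := by
  have two_nonpos := genBinom_two_nonpos hα0 hα1
  obtain rfl | hk4 := hk.eq_or_lt
  · have three_nonneg : 0 ≤ genBinom α 3 := by
      rw [genBinom_succ_eq_neg_one_pow_mul_abs hα0 hα1 2]
      positivity
    linarith
  · have ratio_nonneg : 0 ≤ (2 - α) * (3 - α) / 12 := by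
      have := mul_nonneg (by linarith : 0 ≤ 2 - α) (by linarith : 0 ≤ 3 - α)
      positivity
    have ratio_le_half : (2 - α) * (3 - α) / 12 ≤ 1 / 2 := by nlinarith
    have abs_le_half : |genBinom α k| ≤ -genBinom α 2 / 2 :=
      calc |genBinom α k| ≤ |genBinom α 4| :=
            abs_genBinom_antitone (abs_le.mpr ⟨by linarith, hα1⟩) hk4
        _ = (2 - α) * (3 - α) / 12 * -genBinom α 2 := by
            rw [genBinom_four, abs_mul, abs_of_nonneg ratio_nonneg, abs_of_nonpos two_nonpos]
        _ ≤ 1 / 2 * -genBinom α 2 := by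
            gcongr
            linarith
        _ = -genBinom α 2 / 2 := by ring
    linarith [neg_abs_le (genBinom α k)]

end GenBinom

/-- The truncated binomial series `∑_{k=0}^m C(α,k)` of `(1 + 1)^α`, the upper index `m` being
included; `2 * genBinomSum (1 - γ) m` is the denominator of `Sbound γ m`. -/
noncomputable def genBinomSum (α : ℝ) (m : ℕ) : ℝ :=
  ∑ k ∈ Finset.range (m + 1), genBinom α k

section GenBinomSum

variable {α : ℝ}

theorem genBinomSum_succ (α : ℝ) (m : ℕ) :
    genBinomSum α (m + 1) = genBinomSum α m + genBinom α (m + 1) :=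
  Finset.sum_range_succ _ _

theorem genBinomSum_one (α : ℝ) : genBinomSum α 1 = 1 + α := by
  simp [genBinomSum, Finset.sum_range_succ, genBinom_zero, genBinom_one]

theorem genBinomSum_one_pos (hα : -1 < α) : 0 < genBinomSum α 1 := by
  rw [genBinomSum_one]
  linarith

theorem genBinomSum_two (α : ℝ) : genBinomSum α 2 = 1 + α / 2 + α ^ 2 / 2 := by
  rw [genBinomSum_succ, genBinomSum_one, genBinom_two]
  ring

theorem genBinomSum_two_pos (α : ℝ) : 0 < genBinomSum α 2 := by
  rw [genBinomSum_two]
  nlinarith [sq_nonneg (α + 1 / 2)]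

theorem genBinomSum_one_le_two_mul_genBinomSum_two (α : ℝ) :
    genBinomSum α 1 ≤ 2 * genBinomSum α 2 := by
  rw [genBinomSum_one, genBinomSum_two]
  linarith [sq_nonneg α]

theorem genBinomSum_eq_one_add_alternating (hα0 : 0 ≤ α) (hα1 : α ≤ 1) (m : ℕ) :
    genBinomSum α m = 1 + ∑ i ∈ Finset.range m, (-1) ^ i * |genBinom α (i + 1)| := by
  simp only [genBinomSum, Finset.sum_range_succ', genBinom_zero, add_comm _ (1 : ℝ),
    ← genBinom_succ_eq_neg_one_pow_mul_abs hα0 hα1]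

theorem genBinomSum_two_le (hα0 : 0 ≤ α) (hα1 : α ≤ 1) {m : ℕ} (hm : 2 ≤ m) :
    genBinomSum α 2 ≤ genBinomSum α m := by
  have abs_antitone : Antitone fun i ↦ |genBinom α (i + 1)| := fun _ _ hij ↦
    abs_genBinom_antitone (abs_le.mpr ⟨by linarith, hα1⟩) (Nat.succ_le_succ hij)
  simp only [genBinomSum_eq_one_add_alternating hα0 hα1]
  gcongr 1 + ?_
  exact sum_range_two_mul_alternating_le (k := 1) abs_antitone (fun _ ↦ abs_nonneg _) hm

end GenBinomSum

section Sbound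

variable {γ : ℝ}

theorem Sbound_succ_sub {m : ℕ} (hm : genBinomSum (1 - γ) m ≠ 0)
    (hm_succ : genBinomSum (1 - γ) (m + 1) ≠ 0) :
    Sbound γ (m + 1) - Sbound γ m = -genBinom (1 - γ) (m + 1) /
      (2 * (genBinomSum (1 - γ) m * genBinomSum (1 - γ) (m + 1))) := by
  change 1 / (2 * genBinomSum (1 - γ) (m + 1)) - 1 / (2 * genBinomSum (1 - γ) m) = _
  field_simp
  rw [genBinomSum_succ]
  ring

theorem Sbound_succ_sub_le (hγ0 : 0 ≤ γ) (hγ1 : γ ≤ 1) {m : ℕ} (hm : 2 ≤ m) :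
    Sbound γ (m + 1) - Sbound γ m ≤
      (-genBinom (1 - γ) 2 / 2) / (2 * (genBinomSum (1 - γ) 2 * genBinomSum (1 - γ) 2)) := by
  have hα0 : 0 ≤ 1 - γ := sub_nonneg.mpr hγ1
  have hα1 : 1 - γ ≤ 1 := sub_le_self 1 hγ0
  have sum_two_pos := genBinomSum_two_pos (1 - γ)
  have sum_two_le := genBinomSum_two_le hα0 hα1 hm
  have sum_two_le_succ := genBinomSum_two_le hα0 hα1 (Nat.le_succ_of_le hm)
  have coeff_two_nonpos := genBinom_two_nonpos hα0 hα1
  have half_coeff_two_le := genBinom_two_div_two_le hα0 hα1 (Nat.succ_le_succ hm)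
  rw [Sbound_succ_sub (sum_two_pos.trans_le sum_two_le).ne'
    (sum_two_pos.trans_le sum_two_le_succ).ne']
  gcongr <;> linarith

theorem le_Sbound_two_sub_Sbound_one (hγ0 : 0 ≤ γ) (hγ1 : γ ≤ 1) :
    (-genBinom (1 - γ) 2 / 2) / (2 * (genBinomSum (1 - γ) 2 * genBinomSum (1 - γ) 2)) ≤
      Sbound γ 2 - Sbound γ 1 := by
  have sum_one_pos : 0 < genBinomSum (1 - γ) 1 := genBinomSum_one_pos (by linarith)
  have sum_two_pos := genBinomSum_two_pos (1 - γ)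
  have sum_one_le := genBinomSum_one_le_two_mul_genBinomSum_two (1 - γ)
  have neg_coeff_two_nonneg : 0 ≤ -genBinom (1 - γ) 2 :=
    neg_nonneg.mpr (genBinom_two_nonpos (sub_nonneg.mpr hγ1) (sub_le_self 1 hγ0))
  rw [Sbound_succ_sub sum_one_pos.ne' sum_two_pos.ne']
  calc (-genBinom (1 - γ) 2 / 2) / (2 * (genBinomSum (1 - γ) 2 * genBinomSum (1 - γ) 2))
    _ = -genBinom (1 - γ) 2 / (2 * (2 * genBinomSum (1 - γ) 2 * genBinomSum (1 - γ) 2)) := by ring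
    _ ≤ -genBinom (1 - γ) 2 / (2 * (genBinomSum (1 - γ) 1 * genBinomSum (1 - γ) 2)) := by gcongr

end Sbound

theorem stmt_9 (γ : ℝ) (h0 : 0 < γ) (h1 : γ < 1) :
    ∀ m : ℕ, 1 ≤ m →
      Sbound γ (m + 1) - Sbound γ m ≤ Sbound γ 2 - Sbound γ 1 := by
  intro m hm
  obtain rfl | hm2 := hm.eq_or_lt
  · exact le_rfl
  · exact (Sbound_succ_sub_le h0.le h1.le hm2).trans (le_Sbound_two_sub_Sbound_one h0.le h1.le)
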